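/- Let N ≥ 2, let μ > 0, λ + μ > 0, k ≠ 0, a > 0, γ > 1, and ρ₀ ≥ 0 be real constants. Suppose (ρ, v, Φ) is a smooth solution on ℝ^N of the stationary compressible Navier–Stokes–Poisson system: div(ρv) = 0, div(ρ v⊗v) = -∇p + kρ∇Φ + μΔv + (μ+λ)∇(div v), ΔΦ = ρ - ρ₀, with pressure law p = aρ^γ and ρ ≥ 0. Assume ρ ∈ L^∞(ℝ^N), Φ ∈ L^∞(ℝ^N), ∇v ∈ L²(ℝ^N), v ∈ L^{N/(N-1)}(ℝ^N), and additionally v ∈ L^{3N/(N-1)}(ℝ^N) in case N ≥ 7. Then v = 0 identically on ℝ^N, and ρ, Φ satisfy the reduced system kρ∇Φ = a∇(ρ^γ) and ΔΦ = ρ - ρ₀ on ℝ^N. -/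

import Mathlib

open MeasureTheory Real Filter

noncomputable section

/-- Partial derivative `∂ⱼ f (x)` of a scalar function on `ℝ^N`. -/
def pd (N : ℕ) (f : EuclideanSpace ℝ (Fin N) → ℝ) (j : Fin N)
    (x : EuclideanSpace ℝ (Fin N)) : ℝ :=
  fderiv ℝ f x (EuclideanSpace.single j 1)

/-- Divergence of a vector field on `ℝ^N`. -/
def divV (N : ℕ) (v : EuclideanSpace ℝ (Fin N) → EuclideanSpace ℝ (Fin N))
    (x : EuclideanSpace ℝ (Fin N)) : ℝ :=
  ∑ j, pd N (fun y => v y j) j x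

/-- Laplacian of a scalar function on `ℝ^N`. -/
def lap (N : ℕ) (f : EuclideanSpace ℝ (Fin N) → ℝ)
    (x : EuclideanSpace ℝ (Fin N)) : ℝ :=
  ∑ j, pd N (pd N f j) j x


lemma exists_cutoff (N : ℕ) : ∃ (σ : ℕ → EuclideanSpace ℝ (Fin N) → ℝ) (M : ℝ), 0 ≤ M ∧
    (∀ n, ContDiff ℝ 1 (σ n)) ∧ (∀ n, HasCompactSupport (σ n)) ∧
    (∀ n x, 0 ≤ σ n x) ∧ (∀ n x, σ n x ≤ 1) ∧
    (∀ (n : ℕ) x, ‖x‖ ≤ (n : ℝ) + 1 → σ n x = 1) ∧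
    (∀ (n : ℕ) x, ‖fderiv ℝ (σ n) x‖ ≤ M / ((n : ℝ) + 1)) ∧
    (∀ (n : ℕ) x, ‖x‖ < (n : ℝ) + 1 → fderiv ℝ (σ n) x = 0) ∧
    (∀ (n : ℕ) x, 2 * ((n : ℝ) + 1) < ‖x‖ → fderiv ℝ (σ n) x = 0) := by
  let f : ContDiffBump (0 : EuclideanSpace ℝ (Fin N)) := ⟨1, 2, one_pos, one_lt_two⟩
  have hfs : ContDiff ℝ 1 f := f.contDiff
  have hfc : HasCompactSupport f := f.hasCompactSupport
  obtain ⟨M, hM⟩ := (hfs.continuous_fderiv one_ne_zero).bounded_above_of_compact_support (hfc.fderiv (𝕜 := ℝ))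
  have hpos : ∀ n : ℕ, (0 : ℝ) < (n : ℝ) + 1 := fun n => by positivity
  have hs1 : ∀ (n : ℕ) (x : EuclideanSpace ℝ (Fin N)), ‖((n : ℝ) + 1)⁻¹ • x‖ = ‖x‖ / ((n : ℝ) + 1) := by
    intro n x
    rw [norm_smul, norm_inv, Real.norm_of_nonneg (hpos n).le, inv_mul_eq_div]
  have h1 : ∀ (n : ℕ) (x : EuclideanSpace ℝ (Fin N)), ‖x‖ ≤ (n : ℝ) + 1 → f (((n : ℝ) + 1)⁻¹ • x) = 1 := by
    intro n x hx
    apply f.one_of_mem_closedBall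
    rw [mem_closedBall_zero_iff, hs1]
    exact (div_le_one (hpos n)).2 hx
  have h0 : ∀ (n : ℕ) (x : EuclideanSpace ℝ (Fin N)), 2 * ((n : ℝ) + 1) < ‖x‖ → f (((n : ℝ) + 1)⁻¹ • x) = 0 := by
    intro n x hx
    apply f.zero_of_le_dist
    rw [dist_zero_right, hs1]
    exact (le_div_iff₀ (hpos n)).2 hx.le
  refine ⟨fun n x => f (((n : ℝ) + 1)⁻¹ • x), M, (norm_nonneg _).trans (hM 0), ?_, ?_, ?_, ?_, h1, ?_, ?_, ?_⟩
  · intro n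
    exact hfs.comp (contDiff_const_smul _)
  · intro n
    apply HasCompactSupport.of_support_subset_isCompact (isCompact_closedBall 0 (2 * ((n : ℝ) + 1)))
    intro x hx
    rw [mem_closedBall_zero_iff]
    by_contra hc
    exact hx (h0 n x (not_le.1 hc))
  · intro n x; exact f.nonneg
  · intro n x; exact f.le_one
  · intro n x
    show ‖fderiv ℝ (fun x => f (((n : ℝ) + 1)⁻¹ • x)) x‖ ≤ _
    rw [fderiv_comp_smul, norm_smul, norm_inv, Real.norm_of_nonneg (hpos n).le, inv_mul_eq_div]
    exact div_le_div_of_nonneg_right (hM _) (hpos n).le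
  · intro n x hx
    have : (fun x => f (((n : ℝ) + 1)⁻¹ • x)) =ᶠ[nhds x] fun _ => 1 := by
      filter_upwards [(isOpen_lt continuous_norm continuous_const).mem_nhds hx] with y hy
      exact h1 n y (le_of_lt hy)
    show fderiv ℝ (fun x => f (((n : ℝ) + 1)⁻¹ • x)) x = 0
    rw [this.fderiv_eq]; simp
  · intro n x hx
    have : (fun x => f (((n : ℝ) + 1)⁻¹ • x)) =ᶠ[nhds x] fun _ => 0 := by
      filter_upwards [(isOpen_lt continuous_const continuous_norm).mem_nhds hx] with y hy
      exact h0 n y hy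
    show fderiv ℝ (fun x => f (((n : ℝ) + 1)⁻¹ • x)) x = 0
    rw [this.fderiv_eq]; simp

lemma sobolev_global (N : ℕ) (hN : 2 ≤ N) (p p' : NNReal) (hp : 1 ≤ p)
    (hp' : (p' : ℝ)⁻¹ = (p : ℝ)⁻¹ - (N : ℝ)⁻¹) : ∃ C : NNReal,
    ∀ f : EuclideanSpace ℝ (Fin N) → ℝ, ContDiff ℝ 1 f → MemLp f p volume →
      eLpNorm f p' volume ≤ C * eLpNorm (fderiv ℝ f) p volume := by
  obtain ⟨σ, M, hM0, hσ, hσc, hσ0, hσ1, hσ2, hσ3, -, -⟩ := exists_cutoff N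
  refine ⟨SNormLESNormFDerivOfEqConst ℝ (volume : Measure (EuclideanSpace ℝ (Fin N))) p, ?_⟩
  intro f hf hfp
  set C := SNormLESNormFDerivOfEqConst ℝ (volume : Measure (EuclideanSpace ℝ (Fin N))) p
  have hfin : Module.finrank ℝ (EuclideanSpace ℝ (Fin N)) = N := by simp
  have hone : (1 : ENNReal) ≤ p := by exact_mod_cast hp
  have hmf : Continuous (fderiv ℝ f) := hf.continuous_fderiv one_ne_zero
  have key : ∀ n : ℕ, eLpNorm (fun x => σ n x * f x) p' volume ≤
      C * (eLpNorm (fderiv ℝ f) p volume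
        + ENNReal.ofReal (M / ((n : ℝ) + 1)) * eLpNorm f p volume) := by
    intro n
    have hM : 0 ≤ M / ((n : ℝ) + 1) := by positivity
    have hu : ContDiff ℝ 1 (fun x => σ n x * f x) := (hσ n).mul hf
    have huc : HasCompactSupport (fun x => σ n x * f x) := (hσc n).mul_right
    refine (eLpNorm_le_eLpNorm_fderiv_of_eq volume hu huc hp
      (by rw [hfin]; omega) (by rw [hfin]; exact hp')).trans ?_
    refine mul_le_mul_right ?_ _
    have e2 : ∀ x, ‖fderiv ℝ (fun x => σ n x * f x) x‖ ≤ ‖fderiv ℝ f x‖ + M / ((n : ℝ) + 1) * ‖f x‖ := by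
      intro x
      have e1 : fderiv ℝ (fun x => σ n x * f x) x = σ n x • fderiv ℝ f x + f x • fderiv ℝ (σ n) x :=
        fderiv_fun_mul ((hσ n).differentiable one_ne_zero x) (hf.differentiable one_ne_zero x)
      rw [e1]
      refine (norm_add_le _ _).trans (add_le_add ?_ ?_)
      · rw [norm_smul, Real.norm_of_nonneg (hσ0 n x)]
        exact mul_le_of_le_one_left (norm_nonneg _) (hσ1 n x)
      · rw [norm_smul, mul_comm]
        exact mul_le_mul_of_nonneg_right (hσ3 n x) (norm_nonneg _)
    have e3 : eLpNorm (fun x => ‖fderiv ℝ f x‖ + M / ((n : ℝ) + 1) * ‖f x‖) p volume ≤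
        eLpNorm (fun x => ‖fderiv ℝ f x‖) p volume
          + eLpNorm (fun x => M / ((n : ℝ) + 1) * ‖f x‖) p volume :=
      eLpNorm_add_le (f := fun x => ‖fderiv ℝ f x‖) (g := fun x => M / ((n : ℝ) + 1) * ‖f x‖)
        hmf.norm.aestronglyMeasurable
        (continuous_const.mul hf.continuous.norm).aestronglyMeasurable hone
    have e4 : eLpNorm (fun x => M / ((n : ℝ) + 1) * ‖f x‖) p volume ≤
        ENNReal.ofReal (M / ((n : ℝ) + 1)) * eLpNorm f p volume := by
      apply eLpNorm_le_mul_eLpNorm_of_ae_le_mul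
      refine Eventually.of_forall fun x => ?_
      rw [norm_mul, norm_norm, Real.norm_of_nonneg hM]
    refine (eLpNorm_mono_real e2).trans (e3.trans ?_)
    rw [eLpNorm_norm]
    exact add_le_add le_rfl e4
  have hlim : eLpNorm f p' volume ≤ atTop.liminf fun n => eLpNorm (fun x => σ n x * f x) p' volume := by
    apply Lp.eLpNorm_lim_le_liminf_eLpNorm
    · intro n; exact ((hσ n).continuous.mul hf.continuous).aestronglyMeasurable
    · refine Eventually.of_forall fun x => ?_
      apply tendsto_const_nhds.congr'
      filter_upwards [eventually_ge_atTop ⌈‖x‖⌉₊] with n hn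
      rw [hσ2 n x, one_mul]
      have := Nat.ceil_le.1 hn
      linarith
  refine hlim.trans ?_
  have ht : Tendsto (fun n : ℕ => (C : ENNReal) * (eLpNorm (fderiv ℝ f) p volume
        + ENNReal.ofReal (M / ((n : ℝ) + 1)) * eLpNorm f p volume)) atTop
      (nhds (C * (eLpNorm (fderiv ℝ f) p volume + 0 * eLpNorm f p volume))) := by
    apply ENNReal.Tendsto.const_mul _ (Or.inr ENNReal.coe_ne_top)
    apply tendsto_const_nhds.add
    apply ENNReal.Tendsto.mul_const _ (Or.inr hfp.2.ne)
    rw [← ENNReal.ofReal_zero]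
    apply ENNReal.tendsto_ofReal
    have := (tendsto_one_div_add_atTop_nhds_zero_nat (𝕜 := ℝ)).const_mul M
    simpa [div_eq_mul_inv] using this
  calc _ ≤ _ := liminf_le_liminf (Eventually.of_forall key)
    _ = _ := ht.liminf_eq
    _ = _ := by simp

lemma rpow_interp {t p s r : ℝ} (ht : 0 ≤ t) (hp : 0 < p) (hps : p ≤ s) (hsr : s ≤ r) :
    t ^ s ≤ t ^ p + t ^ r := by
  have h1 : 0 ≤ t ^ p := rpow_nonneg ht _
  have h2 : 0 ≤ t ^ r := rpow_nonneg ht _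
  rcases le_total t 1 with h | h
  · have := rpow_le_rpow_of_exponent_ge_of_imp ht h hps (fun _ h0 => absurd h0 (hp.trans_le hps).ne')
    linarith
  · have := rpow_le_rpow_of_exponent_le h hsr
    linarith

lemma memLp_iff_int {N : ℕ} {F : Type*} [NormedAddCommGroup F] {u : EuclideanSpace ℝ (Fin N) → F} (hu : Continuous u)
    {p : ℝ} (hp : 0 < p) :
    Integrable (fun x => ‖u x‖ ^ p) ↔ MemLp u (ENNReal.ofReal p) volume := by
  rw [← integrable_norm_rpow_iff hu.aestronglyMeasurable (by simpa using hp) ENNReal.ofReal_ne_top,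
      ENNReal.toReal_ofReal hp.le]

lemma int_interp {N : ℕ} {F : Type*} [NormedAddCommGroup F] {u : EuclideanSpace ℝ (Fin N) → F} (hu : Continuous u)
    {p s r : ℝ} (hp : 0 < p) (hps : p ≤ s) (hsr : s ≤ r)
    (h1 : Integrable (fun x => ‖u x‖ ^ p)) (h2 : Integrable (fun x => ‖u x‖ ^ r)) :
    Integrable (fun x => ‖u x‖ ^ s) := by
  refine (h1.add h2).mono' ((hu.norm.rpow_const fun x => Or.inr (by linarith)).aestronglyMeasurable)
    (Eventually.of_forall fun x => ?_)
  rw [Real.norm_of_nonneg (by positivity)]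
  exact rpow_interp (norm_nonneg _) hp hps hsr

lemma opNorm_sq_le {N : ℕ} (L : EuclideanSpace ℝ (Fin N) →L[ℝ] ℝ) :
    ‖L‖ ^ 2 ≤ ∑ j, (L (EuclideanSpace.single j 1)) ^ 2 := by
  have h0 : 0 ≤ ∑ j, (L (EuclideanSpace.single j 1)) ^ 2 := Finset.sum_nonneg fun _ _ => sq_nonneg _
  have : ‖L‖ ≤ √(∑ j, (L (EuclideanSpace.single j 1)) ^ 2) := by
    apply L.opNorm_le_bound (sqrt_nonneg _)
    intro y
    have e : L y = ∑ j, L (EuclideanSpace.single j 1) * y j := by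
      have hy : y = ∑ j, y j • EuclideanSpace.single j (1 : ℝ) := by
        ext i
        simp [Finset.sum_apply, Pi.single_apply]
      conv_lhs => rw [hy]
      rw [map_sum]
      refine Finset.sum_congr rfl fun j _ => ?_
      rw [map_smul, smul_eq_mul, mul_comm]
    rw [e, EuclideanSpace.norm_eq, ← sqrt_mul h0]
    apply abs_le_sqrt
    simp only [Real.norm_eq_abs, sq_abs]
    exact Finset.sum_mul_sq_le_sq_mul_sq _ _ _
  calc ‖L‖ ^ 2 ≤ √(∑ j, (L (EuclideanSpace.single j 1)) ^ 2) ^ 2 := by gcongr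
    _ = _ := sq_sqrt h0

lemma scalar_L3 (N : ℕ) (hN : 2 ≤ N) (hN6 : N ≤ 6) (u : EuclideanSpace ℝ (Fin N) → ℝ)
    (hu : ContDiff ℝ 1 u) (hq : Integrable (fun x => ‖u x‖ ^ ((N : ℝ) / ((N : ℝ) - 1))))
    (hd : Integrable (fun x => ‖fderiv ℝ u x‖ ^ (2 : ℝ))) :
    Integrable (fun x => ‖u x‖ ^ (3 : ℝ)) := by
  have hN2 : (2 : ℝ) ≤ N := by exact_mod_cast hN
  have hN6' : (N : ℝ) ≤ 6 := by exact_mod_cast hN6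
  have hq0 : 0 < (N : ℝ) / ((N : ℝ) - 1) := by apply div_pos <;> linarith
  have hq2 : (N : ℝ) / ((N : ℝ) - 1) ≤ 2 := by
    rw [div_le_iff₀ (by linarith)]; linarith
  have hdc : Continuous (fderiv ℝ u) := hu.continuous_fderiv one_ne_zero
  rcases hN.eq_or_lt with h2 | h3
  · subst h2
    have hq' : Integrable (fun x => ‖u x‖ ^ (2 : ℝ)) := by
      convert hq using 3; norm_num
    obtain ⟨C, hC⟩ := sobolev_global 2 le_rfl 1 2 le_rfl (by norm_num)
    have hf : ContDiff ℝ 1 (fun x => u x ^ 2) := hu.pow 2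
    have hsq : ∀ x, ‖u x‖ ^ (2 : ℝ) = u x ^ 2 := by
      intro x; rw [rpow_two, Real.norm_eq_abs, sq_abs]
    have hm : MemLp (fun x => u x ^ 2) ((1 : NNReal) : ENNReal) volume := by
      rw [ENNReal.coe_one, memLp_one_iff_integrable]
      exact hq'.congr (Eventually.of_forall hsq)
    have h1 := hC _ hf hm
    have hdf : Integrable (fderiv ℝ (fun x => u x ^ 2)) := by
      refine (hq'.add hd).mono' (hf.continuous_fderiv one_ne_zero).aestronglyMeasurable
        (Eventually.of_forall fun x => ?_)
      have : fderiv ℝ (fun x => u x ^ 2) x = (2 * u x) • fderiv ℝ u x := by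
        have := ((hu.differentiable one_ne_zero x).hasFDerivAt.pow 2).fderiv
        simpa using this
      rw [this, norm_smul, norm_mul]
      simp only [Real.norm_ofNat, Pi.add_apply, rpow_two]
      nlinarith [sq_nonneg (‖u x‖ - ‖fderiv ℝ u x‖)]
    have h2 : MemLp (fun x => u x ^ 2) ((2 : NNReal) : ENNReal) volume := by
      refine ⟨hf.continuous.aestronglyMeasurable, h1.trans_lt ?_⟩
      apply ENNReal.mul_lt_top ENNReal.coe_lt_top
      rw [ENNReal.coe_one]
      exact (memLp_one_iff_integrable.2 hdf).2
    have h4 : Integrable (fun x => ‖u x‖ ^ (4 : ℝ)) := by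
      have h5 : MemLp (fun x => u x ^ 2) (ENNReal.ofReal 2) volume := by
        convert h2 using 1; norm_num
      rw [← memLp_iff_int hf.continuous two_pos] at h5
      refine h5.congr (Eventually.of_forall fun x => ?_)
      show ‖u x ^ 2‖ ^ (2 : ℝ) = ‖u x‖ ^ (4 : ℝ)
      rw [rpow_two, show (4 : ℝ) = ((4 : ℕ) : ℝ) by norm_num, rpow_natCast, norm_pow]
      ring
    exact int_interp hu.continuous two_pos (by norm_num) (by norm_num) hq' h4
  · have hN3 : (3 : ℝ) ≤ N := by exact_mod_cast h3
    set r : ℝ := 2 * N / (N - 2) with hr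
    have hr0 : 0 < r := by apply div_pos <;> linarith
    have hr3 : 3 ≤ r := by
      rw [hr, le_div_iff₀ (by linarith)]; linarith
    obtain ⟨C, hC⟩ := sobolev_global N hN 2 r.toNNReal (by norm_num) (by
      rw [Real.coe_toNNReal _ hr0.le, hr]
      have : (N : ℝ) - 2 ≠ 0 := by linarith
      have : (N : ℝ) ≠ 0 := by linarith
      push_cast
      field_simp)
    set q : ℝ := (N : ℝ) / ((N : ℝ) - 1)
    have hd2 : MemLp (fderiv ℝ u) ((2 : NNReal) : ENNReal) volume := by
      rw [memLp_iff_int hdc two_pos] at hd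
      have e2 : ((2 : NNReal) : ENNReal) = ENNReal.ofReal 2 := by norm_num
      rw [e2]
      exact hd
    let f : ℕ → EuclideanSpace ℝ (Fin N) → ℝ := fun n x => ((n : ℝ) + 1) * sin (u x / ((n : ℝ) + 1))
    have hpos : ∀ n : ℕ, (0 : ℝ) < (n : ℝ) + 1 := fun n => by positivity
    have hf : ∀ n, ContDiff ℝ 1 (f n) := fun n =>
      contDiff_const.mul (contDiff_sin.comp (hu.div_const _))
    have hfb : ∀ n x, ‖f n x‖ ≤ ‖u x‖ := by
      intro n x
      simp only [f]
      rw [norm_mul, Real.norm_of_nonneg (hpos n).le]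
      have : ‖sin (u x / ((n : ℝ) + 1))‖ ≤ ‖u x‖ / ((n : ℝ) + 1) := by
        rw [Real.norm_eq_abs]
        refine abs_sin_le_abs.trans ?_
        rw [abs_div, abs_of_pos (hpos n), Real.norm_eq_abs]
      calc _ ≤ ((n : ℝ) + 1) * (‖u x‖ / ((n : ℝ) + 1)) := by gcongr
        _ = _ := by field_simp
    have hfK : ∀ n x, ‖f n x‖ ≤ (n : ℝ) + 1 := by
      intro n x
      simp only [f]
      rw [norm_mul, Real.norm_of_nonneg (hpos n).le]
      exact mul_le_of_le_one_right (hpos n).le (abs_sin_le_one _)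
    have hm : ∀ n, MemLp (f n) ((2 : NNReal) : ENNReal) volume := by
      intro n
      have : MemLp (f n) (ENNReal.ofReal 2) volume := by
        rw [← memLp_iff_int (hf n).continuous two_pos]
        refine (hq.const_mul (((n : ℝ) + 1) ^ (2 - q))).mono'
          ((hf n).continuous.norm.rpow_const fun x => Or.inr two_pos.le).aestronglyMeasurable
          (Eventually.of_forall fun x => ?_)
        rw [Real.norm_of_nonneg (by positivity)]
        have e : (2 : ℝ) = (2 - q) + q := by ring
        calc ‖f n x‖ ^ (2 : ℝ) = ‖f n x‖ ^ (2 - q) * ‖f n x‖ ^ q := by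
              rw [← rpow_add_of_nonneg (norm_nonneg _) (by linarith) hq0.le, ← e]
          _ ≤ _ := by
              apply mul_le_mul
              · exact rpow_le_rpow (norm_nonneg _) (hfK n x) (by linarith)
              · exact rpow_le_rpow (norm_nonneg _) (hfb n x) hq0.le
              · positivity
              · have := hpos n
                positivity
      convert this using 1; norm_num
    have hdf : ∀ n, eLpNorm (fderiv ℝ (f n)) ((2 : NNReal) : ENNReal) volume ≤ eLpNorm (fderiv ℝ u) ((2 : NNReal) : ENNReal) volume := by
      intro n
      apply eLpNorm_mono
      intro x
      have e : HasFDerivAt (f n) (((n : ℝ) + 1) • (cos (u x / ((n : ℝ) + 1)) • (((n : ℝ) + 1)⁻¹ • fderiv ℝ u x))) x := by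
        have h1 := (hu.differentiable one_ne_zero x).hasFDerivAt
        have h2 : HasFDerivAt (fun x => u x / ((n : ℝ) + 1)) (((n : ℝ) + 1)⁻¹ • fderiv ℝ u x) x := by
          simp only [div_eq_mul_inv]
          exact h1.mul_const _
        exact (h2.sin).const_mul _
      rw [e.fderiv, norm_smul, norm_smul, norm_smul, norm_inv, Real.norm_of_nonneg (hpos n).le]
      have hc : ‖cos (u x / ((n : ℝ) + 1))‖ ≤ 1 := abs_cos_le_one _
      have := (hpos n).ne'
      calc _ = ‖cos (u x / ((n : ℝ) + 1))‖ * ‖fderiv ℝ u x‖ := by field_simp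
        _ ≤ _ := mul_le_of_le_one_left (norm_nonneg _) hc
    have hlim : eLpNorm u r.toNNReal volume ≤ atTop.liminf fun n => eLpNorm (f n) r.toNNReal volume := by
      apply Lp.eLpNorm_lim_le_liminf_eLpNorm
      · intro n; exact (hf n).continuous.aestronglyMeasurable
      · refine Eventually.of_forall fun x => ?_
        have hds : HasDerivAt (fun t => sin (u x * t)) (u x) 0 := by
          have := (hasDerivAt_id (0 : ℝ)).const_mul (u x)
          have := this.sin
          simpa using this
        have hsl := hds.tendsto_slope
        have ht : Tendsto (fun n : ℕ => 1 / ((n : ℝ) + 1)) atTop (nhdsWithin 0 {0}ᶜ) := by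
          rw [tendsto_nhdsWithin_iff]
          refine ⟨tendsto_one_div_add_atTop_nhds_zero_nat, Eventually.of_forall fun n => ?_⟩
          have := hpos n
          simp only [Set.mem_compl_iff, Set.mem_singleton_iff]
          positivity
        refine (hsl.comp ht).congr fun n => ?_
        simp [slope_def_field, f, div_eq_mul_inv, mul_comm]
    have hfin : eLpNorm u r.toNNReal volume < ⊤ := by
      refine lt_of_le_of_lt (hlim.trans ((liminf_le_liminf (Eventually.of_forall fun n =>
        (hC _ (hf n) (hm n)).trans (mul_le_mul_right (hdf n) _))).trans ?_)) (ENNReal.mul_lt_top (ENNReal.coe_lt_top (r := C)) hd2.2)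
      simp
    have hur : Integrable (fun x => ‖u x‖ ^ r) := by
      rw [memLp_iff_int hu.continuous hr0]
      exact ⟨hu.continuous.aestronglyMeasurable, hfin⟩
    exact int_interp hu.continuous hq0 (by linarith) hr3 hq hur

lemma vec_L3 (N : ℕ) (hN : 2 ≤ N)
    (v : EuclideanSpace ℝ (Fin N) → EuclideanSpace ℝ (Fin N)) (hv : ContDiff ℝ 1 v)
    (hgrad : Integrable (fun x => ∑ i, ∑ j, (pd N (fun y => v y i) j x) ^ 2))
    (hvL : Integrable (fun x => ‖v x‖ ^ ((N : ℝ) / ((N : ℝ) - 1))))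
    (hvL7 : 7 ≤ N →
      Integrable (fun x => ‖v x‖ ^ ((3 * (N : ℝ)) / ((N : ℝ) - 1)))) :
    Integrable (fun x => ‖v x‖ ^ (3 : ℝ)) := by
  have hN2 : (2 : ℝ) ≤ N := by exact_mod_cast hN
  have hq0 : 0 < (N : ℝ) / ((N : ℝ) - 1) := by apply div_pos <;> linarith
  have hq2 : (N : ℝ) / ((N : ℝ) - 1) ≤ 2 := by
    rw [div_le_iff₀ (by linarith)]; linarith
  by_cases h7 : 7 ≤ N
  · refine int_interp hv.continuous hq0 (by linarith) ?_ hvL (hvL7 h7)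
    rw [le_div_iff₀ (by linarith)]; linarith
  have hvi : ∀ i, ContDiff ℝ 1 (fun y => v y i) := fun i => (contDiff_euclidean.1 hv) i
  have hle : ∀ i x, ‖v x i‖ ≤ ‖v x‖ := fun i x => PiLp.norm_apply_le _ _
  have hi : ∀ i, MemLp (fun y => v y i) (ENNReal.ofReal 3) volume := by
    intro i
    rw [← memLp_iff_int (hvi i).continuous (by norm_num)]
    apply scalar_L3 N hN (by omega) _ (hvi i)
    · refine hvL.mono' ((hvi i).continuous.norm.rpow_const fun x => Or.inr hq0.le).aestronglyMeasurable
        (Eventually.of_forall fun x => ?_)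
      rw [Real.norm_of_nonneg (by positivity)]
      exact rpow_le_rpow (norm_nonneg _) (hle i x) hq0.le
    · refine hgrad.mono' ((((hvi i).continuous_fderiv one_ne_zero).norm.rpow_const fun x => Or.inr two_pos.le).aestronglyMeasurable)
        (Eventually.of_forall fun x => ?_)
      rw [Real.norm_of_nonneg (by positivity), rpow_two]
      refine (opNorm_sq_le _).trans ?_
      exact Finset.single_le_sum (f := fun i => ∑ j, (pd N (fun y => v y i) j x) ^ 2)
        (fun i _ => Finset.sum_nonneg fun _ _ => sq_nonneg _) (Finset.mem_univ i)
  rw [memLp_iff_int hv.continuous (by norm_num)]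
  have hs : MemLp (fun x => ∑ i, ‖v x i‖) (ENNReal.ofReal 3) volume :=
    memLp_finsetSum _ (fun i _ => (hi i).norm)
  refine hs.mono hv.continuous.aestronglyMeasurable (Eventually.of_forall fun x => ?_)
  rw [Real.norm_of_nonneg (Finset.sum_nonneg fun _ _ => norm_nonneg _)]
  have hy : v x = ∑ j, v x j • EuclideanSpace.single j (1 : ℝ) := by
    ext i
    simp [Finset.sum_apply, Pi.single_apply]
  conv_lhs => rw [hy]
  refine (norm_sum_le _ _).trans (le_of_eq ?_)
  refine Finset.sum_congr rfl fun j _ => ?_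
  simp [norm_smul]

lemma div_zero_integral (N : ℕ) (hN : 2 ≤ N)
    (F : Fin N → EuclideanSpace ℝ (Fin N) → ℝ) (D w G : EuclideanSpace ℝ (Fin N) → ℝ) (A : ℝ)
    (hF : ∀ j, ContDiff ℝ 1 (F j)) (hD : ∀ x, D x = ∑ j, pd N (F j) j x)
    (hDi : Integrable D) (hA : 0 ≤ A)
    (hw : Continuous w) (hw0 : ∀ x, 0 ≤ w x)
    (hwi : Integrable (fun x => w x ^ ((N : ℝ) / ((N : ℝ) - 1))))
    (hG0 : ∀ x, 0 ≤ G x) (hGi : Integrable G)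
    (hFb : ∀ j x, |F j x| ≤ A * (w x + G x)) : ∫ x, D x = 0 := by
  obtain ⟨σ, M, hM0, hσ, hσc, hσ0, hσ1, hσ2, hσ3, hσ4, hσ5⟩ := exists_cutoff N
  have hN2 : (2 : ℝ) ≤ N := by exact_mod_cast hN
  have hconj : ((N : ℝ) / ((N : ℝ) - 1)).HolderConjugate (N : ℝ) := by
    refine ⟨?_, ?_, ?_⟩
    · have : (N : ℝ) - 1 ≠ 0 := by linarith
      field_simp
      ring
    · apply div_pos <;> linarith
    · linarith
  set q : ℝ := (N : ℝ) / ((N : ℝ) - 1) with hq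
  have hq0 : 0 < q := hconj.pos
  have hpos : ∀ n : ℕ, (0 : ℝ) < (n : ℝ) + 1 := fun n => by positivity
  -- integration by parts
  have ibp : ∀ n, ∫ x, σ n x * D x = - ∑ j, ∫ x, fderiv ℝ (σ n) x (EuclideanSpace.single j 1) * F j x := by
    intro n
    have i1 : ∀ j, Integrable (fun x => σ n x * fderiv ℝ (F j) x (EuclideanSpace.single j 1)) := by
      intro j
      apply Continuous.integrable_of_hasCompactSupport
      · exact (hσ n).continuous.mul (((hF j).continuous_fderiv one_ne_zero).clm_apply continuous_const)
      · exact (hσc n).mul_right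
    have i2 : ∀ j, Integrable (fun x => fderiv ℝ (σ n) x (EuclideanSpace.single j 1) * F j x) := by
      intro j
      apply Continuous.integrable_of_hasCompactSupport
      · exact (((hσ n).continuous_fderiv one_ne_zero).clm_apply continuous_const).mul (hF j).continuous
      · exact ((hσc n).fderiv_apply (𝕜 := ℝ) _).mul_right
    have i3 : ∀ j, Integrable (fun x => σ n x * F j x) := by
      intro j
      apply Continuous.integrable_of_hasCompactSupport
      · exact (hσ n).continuous.mul (hF j).continuous
      · exact (hσc n).mul_right
    have : ∀ x, σ n x * D x = ∑ j, σ n x * fderiv ℝ (F j) x (EuclideanSpace.single j 1) := by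
      intro x; rw [hD, Finset.mul_sum]; rfl
    simp_rw [this]
    rw [integral_finsetSum _ (fun j _ => i1 j), ← Finset.sum_neg_distrib]
    refine Finset.sum_congr rfl fun j _ => ?_
    exact integral_mul_fderiv_eq_neg_fderiv_mul_of_integrable (i2 j) (i1 j) (i3 j)
      (fun x _ => (hσ n).differentiable one_ne_zero x) (fun x _ => (hF j).differentiable one_ne_zero x)
  -- left side tends to the integral
  have lim1 : Tendsto (fun n => ∫ x, σ n x * D x) atTop (nhds (∫ x, D x)) := by
    apply tendsto_integral_of_dominated_convergence (fun x => ‖D x‖)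
    · intro n; exact (hσ n).continuous.aestronglyMeasurable.mul hDi.1
    · exact hDi.norm
    · intro n
      refine Eventually.of_forall fun x => ?_
      rw [norm_mul, Real.norm_of_nonneg (hσ0 n x)]
      exact mul_le_of_le_one_left (norm_nonneg _) (hσ1 n x)
    · refine Eventually.of_forall fun x => ?_
      apply tendsto_const_nhds.congr'
      filter_upwards [eventually_ge_atTop ⌈‖x‖⌉₊] with n hn
      rw [hσ2 n x, one_mul]
      have := Nat.ceil_le.1 hn
      linarith
  -- tail
  let T : ℕ → ℝ := fun n => ∫ x, (Set.indicator {x | (n : ℝ) + 1 ≤ ‖x‖} w x) ^ q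
  have hms : ∀ n : ℕ, MeasurableSet {x : EuclideanSpace ℝ (Fin N) | (n : ℝ) + 1 ≤ ‖x‖} := fun n =>
    (isClosed_le continuous_const continuous_norm).measurableSet
  have hind0 : ∀ (n : ℕ) x, 0 ≤ Set.indicator {x | (n : ℝ) + 1 ≤ ‖x‖} w x := fun n x =>
    Set.indicator_nonneg (fun x _ => hw0 x) x
  have hTle : ∀ (n : ℕ) x, ‖(Set.indicator {x | (n : ℝ) + 1 ≤ ‖x‖} w x) ^ q‖ ≤ w x ^ q := by
    intro n x
    rw [Real.norm_of_nonneg (rpow_nonneg (hind0 n x) _)]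
    exact rpow_le_rpow (hind0 n x) (Set.indicator_le_self' (fun x _ => hw0 x) x) hq0.le
  have hTm : ∀ n : ℕ, Measurable (fun x => (Set.indicator {x | (n : ℝ) + 1 ≤ ‖x‖} w x)) := fun n =>
    hw.measurable.indicator (hms n)
  have limT : Tendsto T atTop (nhds 0) := by
    have : (0 : ℝ) = ∫ x : EuclideanSpace ℝ (Fin N), (0 : ℝ) := by simp
    rw [this]
    apply tendsto_integral_of_dominated_convergence (fun x => w x ^ q)
    · intro n; exact ((hTm n).pow_const q).aestronglyMeasurable
    · exact hwi
    · intro n; exact Eventually.of_forall (hTle n)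
    · refine Eventually.of_forall fun x => ?_
      apply tendsto_const_nhds.congr'
      filter_upwards [eventually_ge_atTop ⌈‖x‖⌉₊] with n hn
      have := Nat.ceil_le.1 hn
      rw [Set.indicator_of_notMem, zero_rpow hq0.ne']
      simp only [Set.mem_ofPred_eq, not_le]
      linarith
  set V : ℝ := 2 ^ N * (volume : Measure (EuclideanSpace ℝ (Fin N))).real (Metric.closedBall 0 1) with hV
  -- main bound
  let g : ℕ → EuclideanSpace ℝ (Fin N) → ℝ := fun n =>
    Set.indicator (Metric.closedBall 0 (2 * ((n : ℝ) + 1))) (fun _ => ((n : ℝ) + 1)⁻¹)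
  have hg0 : ∀ n x, 0 ≤ g n x := fun n x => Set.indicator_nonneg (fun x _ => by positivity) x
  have hgint : ∀ n, ∫ x, g n x ^ (N : ℝ) = V := by
    intro n
    have : ∀ x, g n x ^ (N : ℝ) = Set.indicator (Metric.closedBall 0 (2 * ((n : ℝ) + 1))) (fun _ => (((n : ℝ) + 1)⁻¹) ^ N) x := by
      intro x
      by_cases hx : x ∈ Metric.closedBall (0 : EuclideanSpace ℝ (Fin N)) (2 * ((n : ℝ) + 1))
      · simp only [g, Set.indicator_of_mem hx, rpow_natCast]
      · simp only [g, Set.indicator_of_notMem hx]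
        exact zero_rpow (by linarith)
    simp_rw [this]
    rw [integral_indicator_const _ measurableSet_closedBall,
      Measure.addHaar_real_closedBall' _ _ (by positivity)]
    have := (hpos n).ne'
    simp only [finrank_euclideanSpace, Fintype.card_fin, smul_eq_mul, hV, mul_pow, inv_pow]
    field_simp
  have memf : ∀ n : ℕ, MemLp (Set.indicator {x | (n : ℝ) + 1 ≤ ‖x‖} w) (ENNReal.ofReal q) volume := by
    intro n
    rw [← integrable_norm_rpow_iff (hTm n).aestronglyMeasurable (by simpa using hq0) ENNReal.ofReal_ne_top,
      ENNReal.toReal_ofReal hq0.le]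
    refine hwi.mono' ((hTm n).norm.pow_const q).aestronglyMeasurable (Eventually.of_forall fun x => ?_)
    have := hTle n x
    rwa [Real.norm_of_nonneg (hind0 n x)]
  have memg : ∀ n : ℕ, MemLp (g n) (ENNReal.ofReal N) volume := by
    intro n
    apply memLp_indicator_const _ measurableSet_closedBall
    right; exact measure_closedBall_lt_top.ne
  have hold : ∀ n : ℕ, ∫ x, Set.indicator {x | (n : ℝ) + 1 ≤ ‖x‖} w x * g n x ≤ T n ^ (1 / q) * V ^ (1 / (N : ℝ)) := by
    intro n
    have := integral_mul_le_Lp_mul_Lq_of_nonneg hconj (Eventually.of_forall (hind0 n))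
      (Eventually.of_forall (hg0 n)) (memf n) (memg n)
    rwa [hgint] at this
  have hfgi : ∀ n : ℕ, Integrable (fun x => Set.indicator {x | (n : ℝ) + 1 ≤ ‖x‖} w x * g n x) := by
    intro n
    have : ENNReal.HolderConjugate (ENNReal.ofReal q) (ENNReal.ofReal N) := hconj.ennrealOfReal
    exact (memf n).integrable_mul (memg n)
  have bnd : ∀ (n : ℕ) j, ‖∫ x, fderiv ℝ (σ n) x (EuclideanSpace.single j 1) * F j x‖ ≤
      M * A * (T n ^ (1 / q) * V ^ (1 / (N : ℝ))) + M * A * (1 / ((n : ℝ) + 1)) * ∫ x, G x := by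
    intro n j
    calc _ ≤ ∫ x, (M * A * (Set.indicator {x | (n : ℝ) + 1 ≤ ‖x‖} w x * g n x) + M * A * (1 / ((n : ℝ) + 1)) * G x) := by
          apply norm_integral_le_of_norm_le
          · exact ((hfgi n).const_mul _).add (hGi.const_mul _)
          · refine Eventually.of_forall fun x => ?_
            have hnn : 0 ≤ M * A * (Set.indicator {x | (n : ℝ) + 1 ≤ ‖x‖} w x * g n x) + M * A * (1 / ((n : ℝ) + 1)) * G x := by
              have := hind0 n x
              have := hg0 n x
              have := hG0 x
              positivity
            by_cases h4 : ‖x‖ < (n : ℝ) + 1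
            · rw [hσ4 n x h4]; simpa using hnn
            by_cases h5 : 2 * ((n : ℝ) + 1) < ‖x‖
            · rw [hσ5 n x h5]; simpa using hnn
            push Not at h4 h5
            rw [Set.indicator_of_mem (by exact h4)]
            simp only [g]
            rw [Set.indicator_of_mem (by simpa using h5)]
            rw [norm_mul]
            have a1 : ‖fderiv ℝ (σ n) x (EuclideanSpace.single j 1)‖ ≤ M / ((n : ℝ) + 1) := by
              refine ((fderiv ℝ (σ n) x).le_opNorm _).trans ?_
              simpa using hσ3 n x
            calc _ ≤ M / ((n : ℝ) + 1) * (A * (w x + G x)) :=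
                  mul_le_mul a1 (hFb j x) (abs_nonneg _) (by positivity)
              _ = _ := by ring
      _ = M * A * (∫ x, Set.indicator {x | (n : ℝ) + 1 ≤ ‖x‖} w x * g n x) + M * A * (1 / ((n : ℝ) + 1)) * ∫ x, G x := by
          rw [integral_add ((hfgi n).const_mul _) (hGi.const_mul _), integral_const_mul, integral_const_mul]
      _ ≤ _ := by
          gcongr
          exact hold n
  have lim2 : ∀ j, Tendsto (fun n => ∫ x, fderiv ℝ (σ n) x (EuclideanSpace.single j 1) * F j x) atTop (nhds 0) := by
    intro j
    refine squeeze_zero_norm (bnd · j) ?_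
    have t1 : Tendsto (fun n => T n ^ (1 / q)) atTop (nhds 0) := by
      have := limT.rpow_const (p := 1 / q) (Or.inr (by positivity))
      rwa [zero_rpow (by positivity)] at this
    have t2 := ((t1.mul_const (V ^ (1 / (N : ℝ)))).const_mul (M * A)).add
      (((tendsto_one_div_add_atTop_nhds_zero_nat (𝕜 := ℝ)).const_mul (M * A)).mul_const (∫ x, G x))
    simpa using t2
  have lim3 : Tendsto (fun n => ∫ x, σ n x * D x) atTop (nhds 0) := by
    simp_rw [ibp]
    have := (tendsto_finsetSum Finset.univ (fun j _ => lim2 j)).neg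
    simpa using this
  exact tendsto_nhds_unique lim1 lim3

lemma pd_mul {N : ℕ} {f g : EuclideanSpace ℝ (Fin N) → ℝ} (hf : ContDiff ℝ 1 f) (hg : ContDiff ℝ 1 g)
    (j : Fin N) (x : EuclideanSpace ℝ (Fin N)) :
    pd N (fun y => f y * g y) j x = pd N f j x * g x + f x * pd N g j x := by
  unfold pd
  rw [fderiv_fun_mul (hf.differentiable one_ne_zero x) (hg.differentiable one_ne_zero x)]
  simp; ring

lemma pd_add {N : ℕ} {f g : EuclideanSpace ℝ (Fin N) → ℝ} (hf : ContDiff ℝ 1 f) (hg : ContDiff ℝ 1 g)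
    (j : Fin N) (x : EuclideanSpace ℝ (Fin N)) :
    pd N (fun y => f y + g y) j x = pd N f j x + pd N g j x := by
  unfold pd
  rw [fderiv_fun_add (hf.differentiable one_ne_zero x) (hg.differentiable one_ne_zero x)]
  simp

lemma pd_const_mul {N : ℕ} {f : EuclideanSpace ℝ (Fin N) → ℝ} (c : ℝ) (hf : ContDiff ℝ 1 f)
    (j : Fin N) (x : EuclideanSpace ℝ (Fin N)) :
    pd N (fun y => c * f y) j x = c * pd N f j x := by
  unfold pd
  rw [fderiv_const_mul (hf.differentiable one_ne_zero x)]
  simp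

lemma pd_sum {N : ℕ} {f : Fin N → EuclideanSpace ℝ (Fin N) → ℝ} (hf : ∀ i, ContDiff ℝ 1 (f i))
    (j : Fin N) (x : EuclideanSpace ℝ (Fin N)) :
    pd N (fun y => ∑ i, f i y) j x = ∑ i, pd N (f i) j x := by
  unfold pd
  rw [fderiv_fun_sum (fun i _ => (hf i).differentiable one_ne_zero x)]
  simp

lemma pd_contDiff {N : ℕ} {f : EuclideanSpace ℝ (Fin N) → ℝ} (hf : ContDiff ℝ (⊤ : ℕ∞) f) (j : Fin N) :
    ContDiff ℝ (⊤ : ℕ∞) (pd N f j) := by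
  unfold pd
  exact (hf.fderiv_right (m := (⊤ : ℕ∞)) (by simp)).clm_apply contDiff_const

/-- Pointwise algebra behind the energy identity. -/
lemma energy_algebra {N : ℕ} (μ c k a γ r Φ R d : ℝ) (hγ : 1 < γ)
    (u rd Φd dd : Fin N → ℝ) (V L : Fin N → Fin N → ℝ)
    (hd : d = ∑ j, V j j)
    (hcont : ∑ j, (rd j * u j + r * V j j) = 0)
    (hmom : ∀ i, ∑ j, ((rd j * u j + r * V j j) * u i + r * u j * V i j) =
      -(a * (γ * R * rd i)) + k * r * Φd i + μ * ∑ j, L i j + c * dd i) :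
    μ * ∑ i, ∑ j, V i j ^ 2 + c * d ^ 2 =
      ∑ j, ((-(1 / 2)) * ((rd j * u j + r * V j j) * (∑ i, u i * u i)
          + r * u j * ∑ i, (V i j * u i + u i * V i j))
        + ((-(a * γ / (γ - 1))) * (γ * R * rd j * u j + (R * r) * V j j)
        + (k * ((rd j * u j + r * V j j) * Φ + r * u j * Φd j)
        + (μ * ∑ i, (V i j * V i j + u i * L i j)
        + c * (V j j * d + u j * dd j))))) := by
  have hm : ∀ i, ∑ j, r * u j * V i j =
      -(a * (γ * R * rd i)) + k * r * Φd i + μ * ∑ j, L i j + c * dd i := by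
    intro i
    rw [← hmom i, Finset.sum_add_distrib, ← Finset.sum_mul, hcont]; ring
  have hs : ∑ i, u i * ∑ j, r * u j * V i j = -(a * γ * R) * ∑ i, rd i * u i + k * r * ∑ i, u i * Φd i
      + μ * ∑ i, u i * ∑ j, L i j + c * ∑ i, u i * dd i := by
    rw [Finset.mul_sum, Finset.mul_sum, Finset.mul_sum, Finset.mul_sum, ← Finset.sum_add_distrib,
      ← Finset.sum_add_distrib, ← Finset.sum_add_distrib]
    refine Finset.sum_congr rfl fun i _ => ?_
    rw [hm]
    ring
  have hc2 : ∑ j, rd j * u j = - (r * d) := by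
    rw [Finset.sum_add_distrib, ← Finset.mul_sum, ← hd] at hcont
    linarith
  have t1 : ∑ j, r * u j * ∑ i, (V i j * u i + u i * V i j) = 2 * ∑ i, u i * ∑ j, r * u j * V i j := by
    simp_rw [Finset.mul_sum]
    rw [Finset.sum_comm]
    refine Finset.sum_congr rfl fun i _ => Finset.sum_congr rfl fun j _ => ?_
    ring
  have t2 : ∑ j, ∑ i, (V i j * V i j + u i * L i j) = ∑ i, ∑ j, V i j ^ 2 + ∑ i, u i * ∑ j, L i j := by
    rw [Finset.sum_comm, ← Finset.sum_add_distrib]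
    refine Finset.sum_congr rfl fun i _ => ?_
    rw [Finset.mul_sum, ← Finset.sum_add_distrib]
    refine Finset.sum_congr rfl fun j _ => ?_
    ring
  have t3 : ∑ j, r * u j * Φd j = r * ∑ j, u j * Φd j := by
    rw [Finset.mul_sum]; refine Finset.sum_congr rfl fun i _ => ?_; ring
  have t4 : ∑ j, γ * R * rd j * u j = γ * R * ∑ j, rd j * u j := by
    rw [Finset.mul_sum]; refine Finset.sum_congr rfl fun i _ => ?_; ring
  rw [Finset.sum_add_distrib, Finset.sum_add_distrib, Finset.sum_add_distrib, Finset.sum_add_distrib,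
    ← Finset.mul_sum, ← Finset.mul_sum, ← Finset.mul_sum, ← Finset.mul_sum, ← Finset.mul_sum,
    Finset.sum_add_distrib, Finset.sum_add_distrib, Finset.sum_add_distrib, Finset.sum_add_distrib,
    ← Finset.sum_mul, ← Finset.sum_mul, ← Finset.sum_mul, hcont, t1, t2, t3, t4, ← Finset.mul_sum, ← hd, hs, hc2]
  have : γ - 1 ≠ 0 := by linarith
  field_simp
  ring

set_option maxHeartbeats 2000000

/-- Liouville type theorem for the stationary compressible
Navier–Stokes–Poisson system on `ℝ^N`, `N ≥ 2`. -/
theorem liouville_NSP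
    (N : ℕ) (hN : 2 ≤ N)
    (μ lam k a γ ρ₀ : ℝ)
    (hμ : 0 < μ) (hlam : 0 < lam + μ) (hk : k ≠ 0) (ha : 0 < a) (hγ : 1 < γ)
    (hρ₀ : 0 ≤ ρ₀)
    (ρ Φ : EuclideanSpace ℝ (Fin N) → ℝ)
    (v : EuclideanSpace ℝ (Fin N) → EuclideanSpace ℝ (Fin N))
    (hρsm : ContDiff ℝ (⊤ : ℕ∞) ρ) (hΦsm : ContDiff ℝ (⊤ : ℕ∞) Φ) (hvsm : ContDiff ℝ (⊤ : ℕ∞) v)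
    (hρnn : ∀ x, 0 ≤ ρ x)
    -- continuity equation: div(ρ v) = 0
    (hcont : ∀ x, ∑ j, pd N (fun y => ρ y * v y j) j x = 0)
    -- momentum equation:
    -- div(ρ v ⊗ v) = -∇p + k ρ ∇Φ + μ Δv + (μ+λ) ∇ div v,  p = a ρ^γ
    (hmom : ∀ x, ∀ i : Fin N,
      ∑ j, pd N (fun y => ρ y * v y j * v y i) j x =
        - pd N (fun y => a * ρ y ^ γ) i x + k * ρ x * pd N Φ i x
          + μ * lap N (fun y => v y i) x + (μ + lam) * pd N (divV N v) i x)
    -- Poisson equation: ΔΦ = ρ - ρ₀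
    (hpois : ∀ x, lap N Φ x = ρ x - ρ₀)
    -- ρ ∈ L^∞, Φ ∈ L^∞
    (hρb : ∃ M, ∀ x, |ρ x| ≤ M)
    (hΦb : ∃ M, ∀ x, |Φ x| ≤ M)
    -- ∇v ∈ L²
    (hgrad : Integrable (fun x => ∑ i, ∑ j, (pd N (fun y => v y i) j x) ^ 2))
    -- v ∈ L^{N/(N-1)}
    (hvL : Integrable (fun x => ‖v x‖ ^ ((N : ℝ) / ((N : ℝ) - 1))))
    -- additionally v ∈ L^{3N/(N-1)} if N ≥ 7
    (hvL7 : 7 ≤ N →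
      Integrable (fun x => ‖v x‖ ^ ((3 * (N : ℝ)) / ((N : ℝ) - 1)))) :
    (∀ x, v x = 0) ∧
      (∀ x, ∀ i : Fin N,
        k * ρ x * pd N Φ i x = a * pd N (fun y => ρ y ^ γ) i x) ∧
      (∀ x, lap N Φ x = ρ x - ρ₀) := by
  have le1 : (1 : WithTop ℕ∞) ≤ ((⊤ : ℕ∞) : WithTop ℕ∞) := by exact_mod_cast le_top
  have hN2 : (2 : ℝ) ≤ N := by exact_mod_cast hN
  have hq0 : 0 < (N : ℝ) / ((N : ℝ) - 1) := by apply div_pos <;> linarith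
  have hq2 : (N : ℝ) / ((N : ℝ) - 1) ≤ 2 := by
    rw [div_le_iff₀ (by linarith)]; linarith
  have hv1 : ContDiff ℝ 1 v := hvsm.of_le le1
  have hρ1 : ContDiff ℝ 1 ρ := hρsm.of_le le1
  have hΦ1 : ContDiff ℝ 1 Φ := hΦsm.of_le le1
  have hviS : ∀ i, ContDiff ℝ (⊤ : ℕ∞) (fun y => v y i) := fun i => (contDiff_euclidean.1 hvsm) i
  have hvi : ∀ i, ContDiff ℝ 1 (fun y => v y i) := fun i => (hviS i).of_le le1
  have hVS : ∀ i j, ContDiff ℝ (⊤ : ℕ∞) (pd N (fun y => v y i) j) := fun i j => pd_contDiff (hviS i) j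
  have hV : ∀ i j, ContDiff ℝ 1 (pd N (fun y => v y i) j) := fun i j => (hVS i j).of_le le1
  have hdS : ContDiff ℝ 1 (divV N v) := by
    unfold divV
    exact ContDiff.sum fun j _ => hV j j
  have hP : ContDiff ℝ 1 (fun y => ρ y ^ γ) := by
    apply hρ1.rpow_const_of_le
    exact_mod_cast hγ.le
  have hPd : ∀ j x, pd N (fun y => ρ y ^ γ) j x = γ * ρ x ^ (γ - 1) * pd N ρ j x := by
    intro j x
    unfold pd
    have := ((hρ1.differentiable one_ne_zero x).hasFDerivAt.rpow_const (p := γ) (Or.inr hγ.le)).fderiv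
    rw [this]; simp
  have hPv : ∀ x, ρ x ^ γ = ρ x ^ (γ - 1) * ρ x := by
    intro x
    have := rpow_add_of_nonneg (hρnn x) (show 0 ≤ γ - 1 by linarith) zero_le_one
    rw [rpow_one] at this
    rw [← this]; congr 1; ring
  have hL3 := vec_L3 N hN v hv1 hgrad hvL hvL7
  have hL2 : Integrable (fun x => ‖v x‖ ^ (2 : ℝ)) :=
    int_interp hv1.continuous hq0 hq2 (by norm_num) hvL hL3
  set S : EuclideanSpace ℝ (Fin N) → ℝ := fun x => ∑ i, ∑ j, (pd N (fun y => v y i) j x) ^ 2 with hS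
  have hS0 : ∀ x, 0 ≤ S x := fun x => Finset.sum_nonneg fun i _ => Finset.sum_nonneg fun j _ => sq_nonneg _
  have hSc : Continuous S := continuous_finsetSum _ fun i _ => continuous_finsetSum _ fun j _ =>
    (hV i j).continuous.pow 2
  have hdS2 : ∀ x, divV N v x ^ 2 ≤ N * S x := by
    intro x
    have h1 : divV N v x ^ 2 ≤ N * ∑ j, (pd N (fun y => v y j) j x) ^ 2 := by
      have := sq_sum_le_card_mul_sum_sq (s := Finset.univ) (f := fun j => pd N (fun y => v y j) j x)
      simpa [divV] using this
    refine h1.trans (mul_le_mul_of_nonneg_left ?_ (by positivity))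
    refine Finset.sum_le_sum fun i _ => ?_
    exact Finset.single_le_sum (f := fun j => (pd N (fun y => v y i) j x) ^ 2) (fun _ _ => sq_nonneg _) (Finset.mem_univ i)
  let D : EuclideanSpace ℝ (Fin N) → ℝ := fun x => μ * S x + (μ + lam) * divV N v x ^ 2
  let F : Fin N → EuclideanSpace ℝ (Fin N) → ℝ := fun j y =>
    (-(1 / 2)) * (ρ y * v y j * (∑ i, v y i * v y i))
        + ((-(a * γ / (γ - 1))) * (ρ y ^ γ * v y j)
        + (k * (ρ y * v y j * Φ y)
        + (μ * (∑ i, v y i * pd N (fun z => v z i) j y)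
        + (μ + lam) * (v y j * divV N v y))))
  have hρv : ∀ j, ContDiff ℝ 1 (fun y => ρ y * v y j) := fun j => hρ1.mul (hvi j)
  have hsq : ContDiff ℝ 1 (fun y => ∑ i, v y i * v y i) := ContDiff.sum fun i _ => (hvi i).mul (hvi i)
  have hA1 : ∀ j, ContDiff ℝ 1 (fun y => ρ y * v y j * (∑ i, v y i * v y i)) := fun j => (hρv j).mul hsq
  have hA2 : ∀ j, ContDiff ℝ 1 (fun y => ρ y ^ γ * v y j) := fun j => hP.mul (hvi j)
  have hA3 : ∀ j, ContDiff ℝ 1 (fun y => ρ y * v y j * Φ y) := fun j => (hρv j).mul hΦ1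
  have hA4 : ∀ j, ContDiff ℝ 1 (fun y => ∑ i, v y i * pd N (fun z => v z i) j y) := fun j =>
    ContDiff.sum fun i _ => (hvi i).mul (hV i j)
  have hA5 : ∀ j, ContDiff ℝ 1 (fun y => v y j * divV N v y) := fun j => (hvi j).mul hdS
  have hB4 : ∀ j, ContDiff ℝ 1 (fun y => μ * (∑ i, v y i * pd N (fun z => v z i) j y)
        + (μ + lam) * (v y j * divV N v y)) := fun j =>
    (contDiff_const.mul (hA4 j)).add (contDiff_const.mul (hA5 j))
  have hB3 : ∀ j, ContDiff ℝ 1 (fun y => k * (ρ y * v y j * Φ y)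
        + (μ * (∑ i, v y i * pd N (fun z => v z i) j y)
        + (μ + lam) * (v y j * divV N v y))) := fun j =>
    (contDiff_const.mul (hA3 j)).add (hB4 j)
  have hB2 : ∀ j, ContDiff ℝ 1 (fun y => (-(a * γ / (γ - 1))) * (ρ y ^ γ * v y j)
        + (k * (ρ y * v y j * Φ y)
        + (μ * (∑ i, v y i * pd N (fun z => v z i) j y)
        + (μ + lam) * (v y j * divV N v y)))) := fun j =>
    (contDiff_const.mul (hA2 j)).add (hB3 j)
  have hF : ∀ j, ContDiff ℝ 1 (F j) := fun j =>
    (contDiff_const.mul (hA1 j)).add (hB2 j)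
  have hcont' : ∀ x, ∑ j, (pd N ρ j x * v x j + ρ x * pd N (fun y => v y j) j x) = 0 := by
    intro x
    rw [← hcont x]
    exact Finset.sum_congr rfl fun j _ => (pd_mul hρ1 (hvi j) j x).symm
  have hDF : ∀ x, D x = ∑ j, pd N (F j) j x := by
    intro x
    have key := energy_algebra μ (μ + lam) k a γ (ρ x) (Φ x) (ρ x ^ (γ - 1)) (divV N v x) hγ
      (fun i => v x i) (fun j => pd N ρ j x) (fun j => pd N Φ j x) (fun j => pd N (divV N v) j x)
      (fun i j => pd N (fun y => v y i) j x) (fun i j => pd N (pd N (fun y => v y i) j) j x)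
      rfl (hcont' x) (by
        intro i
        have h := hmom x i
        rw [pd_const_mul a hP, hPd] at h
        rw [show (∑ j, pd N (pd N (fun y => v y i) j) j x) = lap N (fun y => v y i) x from rfl, ← h]
        refine Finset.sum_congr rfl fun j _ => ?_
        rw [pd_mul (hρv j) (hvi i), pd_mul hρ1 (hvi j)])
    refine key.trans (Finset.sum_congr rfl fun j _ => ?_)
    simp only [F]
    rw [pd_add (contDiff_const.mul (hA1 j)) (hB2 j), pd_add (contDiff_const.mul (hA2 j)) (hB3 j),
      pd_add (contDiff_const.mul (hA3 j)) (hB4 j),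
      pd_add (contDiff_const.mul (hA4 j)) (contDiff_const.mul (hA5 j)),
      pd_const_mul _ (hA1 j), pd_const_mul _ (hA2 j), pd_const_mul _ (hA3 j), pd_const_mul _ (hA4 j),
      pd_const_mul _ (hA5 j), pd_mul (hρv j) hsq, pd_mul hP (hvi j), pd_mul (hρv j) hΦ1,
      pd_mul (hvi j) hdS, pd_mul hρ1 (hvi j), pd_sum (fun i => (hvi i).mul (hvi i)),
      pd_sum (fun i => (hvi i).mul (hV i j)), hPd, hPv]
    simp_rw [pd_mul (hvi _) (hvi _), pd_mul (hvi _) (hV _ j)]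
  have hDc : Continuous D := (continuous_const.mul hSc).add (continuous_const.mul (hdS.continuous.pow 2))
  have hD0 : ∀ x, 0 ≤ D x := fun x => by
    have := hS0 x
    have : 0 < μ + lam := by linarith
    positivity
  have hDi : Integrable D := by
    refine (hgrad.const_mul (μ + (μ + lam) * N)).mono' hDc.aestronglyMeasurable (Eventually.of_forall fun x => ?_)
    rw [Real.norm_of_nonneg (hD0 x)]
    have := mul_le_mul_of_nonneg_left (hdS2 x) (show 0 ≤ μ + lam by linarith)
    show μ * S x + (μ + lam) * divV N v x ^ 2 ≤ (μ + (μ + lam) * N) * S x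
    linarith
  obtain ⟨M1, hM1⟩ := hρb
  obtain ⟨M2, hM2⟩ := hΦb
  have hM1' : 0 ≤ M1 := (abs_nonneg _).trans (hM1 0)
  have hM2' : 0 ≤ M2 := (abs_nonneg _).trans (hM2 0)
  have hγ1 : 0 < γ - 1 := by linarith
  have hc0 : 0 < μ + lam := by linarith
  have integral_zero_D : ∫ x, D x = 0 := by
    apply div_zero_integral N hN F D (fun x => ‖v x‖)
      (fun x => ‖v x‖ ^ (3 : ℝ) + ‖v x‖ ^ (2 : ℝ) + S x)
      (M1 + a * γ / (γ - 1) * M1 ^ γ + |k| * (M1 * M2) + μ + (μ + lam) * (1 + N)) hF hDF hDi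
    · positivity
    · exact hv1.continuous.norm
    · exact fun x => norm_nonneg _
    · exact hvL
    · intro x
      have := hS0 x
      positivity
    · exact (hL3.add hL2).add hgrad
    · intro j x
      have hle : ∀ i, |v x i| ≤ ‖v x‖ := fun i => PiLp.norm_apply_le (v x) i
      have hn2 : ∑ i, v x i * v x i = ‖v x‖ ^ 2 := by
        rw [EuclideanSpace.norm_sq_eq]
        refine Finset.sum_congr rfl fun i _ => ?_
        rw [Real.norm_eq_abs, sq_abs, sq]
      rw [show ‖v x‖ ^ (3 : ℝ) = ‖v x‖ ^ 3 by exact_mod_cast rpow_natCast ‖v x‖ 3, rpow_two]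
      set w := ‖v x‖ with hw
      have hw0 : 0 ≤ w := norm_nonneg _
      have s0 := hS0 x
      have b1 : |(-(1 / 2)) * (ρ x * v x j * (∑ i, v x i * v x i))| ≤ M1 * w ^ 3 := by
        rw [hn2, abs_mul, abs_mul, abs_mul, abs_of_nonneg (by positivity : 0 ≤ w ^ 2)]
        have : |(-(1 / 2) : ℝ)| ≤ 1 := by norm_num [abs_le]
        calc _ ≤ 1 * (M1 * w * w ^ 2) := by
              gcongr
              · exact hM1 x
              · exact hle j
          _ = _ := by ring
      have b2 : |(-(a * γ / (γ - 1))) * (ρ x ^ γ * v x j)| ≤ a * γ / (γ - 1) * M1 ^ γ * w := by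
        rw [abs_mul, abs_neg, abs_mul, abs_of_nonneg (by positivity : 0 ≤ a * γ / (γ - 1)), mul_assoc,
          abs_of_nonneg (rpow_nonneg (hρnn x) _)]
        gcongr
        · exact hρnn x
        · exact (le_abs_self _).trans (hM1 x)
        · exact hle j
      have b3 : |k * (ρ x * v x j * Φ x)| ≤ |k| * (M1 * M2) * w := by
        rw [abs_mul, abs_mul, abs_mul]
        calc _ ≤ |k| * (M1 * w * M2) := by
              gcongr
              · exact hM1 x
              · exact hle j
              · exact hM2 x
          _ = _ := by ring
      have b4 : |μ * (∑ i, v x i * pd N (fun z => v z i) j x)| ≤ μ * (w ^ 2 + S x) := by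
        rw [abs_mul, abs_of_pos hμ]
        gcongr
        refine (Finset.abs_sum_le_sum_abs _ _).trans ?_
        rw [← hn2, hS, ← Finset.sum_add_distrib]
        refine Finset.sum_le_sum fun i _ => ?_
        have h1 : (pd N (fun z => v z i) j x) ^ 2 ≤ ∑ j, (pd N (fun z => v z i) j x) ^ 2 :=
          Finset.single_le_sum (f := fun j => (pd N (fun y => v y i) j x) ^ 2) (fun _ _ => sq_nonneg _) (Finset.mem_univ j)
        refine le_trans ?_ (add_le_add le_rfl h1)
        rw [abs_le]
        constructor <;> nlinarith [sq_nonneg (v x i - pd N (fun z => v z i) j x), sq_nonneg (v x i + pd N (fun z => v z i) j x)]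
      have b5 : |(μ + lam) * (v x j * divV N v x)| ≤ (μ + lam) * (1 + N) * (w ^ 2 + S x) := by
        rw [abs_mul, abs_of_pos hc0, mul_assoc]
        gcongr
        have h1 : |v x j * divV N v x| ≤ v x j ^ 2 + divV N v x ^ 2 := by
          rw [abs_le]
          constructor <;> nlinarith [sq_nonneg (v x j - divV N v x), sq_nonneg (v x j + divV N v x)]
        have h2 : v x j ^ 2 ≤ w ^ 2 := by
          rw [← sq_abs]
          gcongr
          exact hle j
        have h3 := hdS2 x
        have h4 : 0 ≤ (N : ℝ) * w ^ 2 := by positivity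
        nlinarith
      have c1 : |F j x| ≤ M1 * w ^ 3 + (a * γ / (γ - 1) * M1 ^ γ * w + (|k| * (M1 * M2) * w
          + (μ * (w ^ 2 + S x) + (μ + lam) * (1 + N) * (w ^ 2 + S x)))) := by
        simp only [F]
        refine (abs_add_le _ _).trans (add_le_add b1 ?_)
        refine (abs_add_le _ _).trans (add_le_add b2 ?_)
        refine (abs_add_le _ _).trans (add_le_add b3 ?_)
        exact (abs_add_le _ _).trans (add_le_add b4 b5)
      refine c1.trans ?_
      have w3 : 0 ≤ w ^ 3 := by positivity
      have w2 : 0 ≤ w ^ 2 := by positivity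
      have k1 : w ^ 3 ≤ w + (w ^ 3 + w ^ 2 + S x) := by linarith
      have k2 : w ≤ w + (w ^ 3 + w ^ 2 + S x) := by linarith
      have k3 : w ^ 2 + S x ≤ w + (w ^ 3 + w ^ 2 + S x) := by linarith
      have e1 := mul_le_mul_of_nonneg_left k1 hM1'
      have e2 := mul_le_mul_of_nonneg_left k2 (by positivity : 0 ≤ a * γ / (γ - 1) * M1 ^ γ)
      have e3 := mul_le_mul_of_nonneg_left k2 (by positivity : 0 ≤ |k| * (M1 * M2))
      have e4 := mul_le_mul_of_nonneg_left k3 hμ.le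
      have e5 := mul_le_mul_of_nonneg_left k3 (by positivity : 0 ≤ (μ + lam) * (1 + (N : ℝ)))
      refine (add_le_add e1 (add_le_add e2 (add_le_add e3 (add_le_add e4 e5)))).trans (le_of_eq ?_)
      ring
  have hD00 : ∀ x, D x = 0 := by
    have h1 := (integral_eq_zero_iff_of_nonneg hD0 hDi).1 integral_zero_D
    have h2 := (hDc.ae_eq_iff_eq volume continuous_zero).1 h1
    intro x; exact congrFun h2 x
  have hSz : ∀ x, S x = 0 := by
    intro x
    have h1 : μ * S x + (μ + lam) * divV N v x ^ 2 = 0 := hD00 x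
    have h2 := hS0 x
    have h3 : 0 ≤ (μ + lam) * divV N v x ^ 2 := by positivity
    have h4 : 0 ≤ μ * S x := by positivity
    have h5 : μ * S x = 0 := by linarith
    exact (mul_eq_zero.1 h5).resolve_left hμ.ne'
  have hfd : ∀ i x, fderiv ℝ (fun y => v y i) x = 0 := by
    intro i x
    have h1 := opNorm_sq_le (fderiv ℝ (fun y => v y i) x)
    have h2 : ∑ j, (fderiv ℝ (fun y => v y i) x (EuclideanSpace.single j 1)) ^ 2 ≤ S x :=
      Finset.single_le_sum (f := fun i => ∑ j, (pd N (fun y => v y i) j x) ^ 2)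
        (fun i _ => Finset.sum_nonneg fun _ _ => sq_nonneg _) (Finset.mem_univ i)
    rw [hSz] at h2
    have h3 : ‖fderiv ℝ (fun y => v y i) x‖ ^ 2 = 0 := le_antisymm (h1.trans h2) (sq_nonneg _)
    simpa using h3
  have hvc : ∀ x, v x = v 0 := by
    intro x
    ext i
    exact is_const_of_fderiv_eq_zero ((hvi i).differentiable one_ne_zero) (hfd i) x 0
  have hv0 : ∀ x, v x = 0 := by
    have hnt : Nontrivial (EuclideanSpace ℝ (Fin N)) := by
      have : Nonempty (Fin N) := ⟨⟨0, by omega⟩⟩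
      infer_instance
    have h1 : Integrable (fun _ : EuclideanSpace ℝ (Fin N) => ‖v 0‖ ^ ((N : ℝ) / ((N : ℝ) - 1))) := by
      refine hvL.congr (Eventually.of_forall fun x => ?_)
      show ‖v x‖ ^ _ = _
      rw [hvc x]
    rw [integrable_const_iff] at h1
    rcases h1 with h | h
    · rw [rpow_eq_zero (norm_nonneg _) hq0.ne', norm_eq_zero] at h
      intro x; rw [hvc x, h]
    · exfalso
      have := h.1
      rw [measure_univ_of_isAddLeftInvariant] at this
      exact lt_irrefl _ this
  refine ⟨hv0, ?_, hpois⟩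
  intro x i
  have h := hmom x i
  have hvf : ∀ i, (fun y => v y i) = fun _ => (0 : ℝ) := by
    intro i; funext y; rw [hv0 y]; rfl
  have hz : ∀ j x, pd N (fun _ => (0 : ℝ)) j x = 0 := by intro j x; simp [pd]
  have hdz : divV N v = fun _ => 0 := by
    funext y; unfold divV; simp [hvf, hz]
  have hlz : lap N (fun y => v y i) x = 0 := by
    unfold lap
    have : ∀ j, pd N (fun y => v y i) j = fun _ => (0 : ℝ) := by
      intro j; funext y; rw [hvf, hz]
    simp [this, hz]
  have hlz2 : ∑ j, pd N (fun y => ρ y * v y j * v y i) j x = 0 := by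
    refine Finset.sum_eq_zero fun j _ => ?_
    have : (fun y => ρ y * v y j * v y i) = fun _ => (0 : ℝ) := by
      funext y; rw [hv0 y]; simp
    rw [this, hz]
  rw [hlz2, hlz, hdz, hz, pd_const_mul a hP] at h
  linarith
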